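/- (Proposition 3.7 (ii), uniform finite-field form) Let p be a prime number and Σ a finite set of prime numbers. Then there exists a constant Q such that for every finite field F of characteristic p with #F > Q and all c, d ∈ F^×, there exist a, b ∈ F^× of Σ'-primary order with c = a + b·d. -/

import Mathlib

/-- A torsion element of a monoid whose (finite) order has all of its prime divisors
outside `S`; for `S' = Primes ∖ S` this says the element has `S'`-primary order. -/
def PrimaryOutside (S : Set ℕ) {M : Type*} [Monoid M] (x : M) : Prop :=
  IsOfFinOrder x ∧ ∀ ℓ : ℕ, ℓ.Prime → ℓ ∣ orderOf x → ℓ ∉ S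


theorem aux_incidence {F : Type} [Field F] [Fintype F] [DecidableEq F] (H : Finset F)
    (hne : H.Nonempty) (h0 : ∀ x ∈ H, x ≠ 0) (hmul : ∀ x ∈ H, ∀ y ∈ H, x * y ∈ H)
    (hinv : ∀ x ∈ H, x⁻¹ ∈ H) (c d : F) (hc : c ≠ 0) (hd : d ≠ 0)
    (hno : ∀ u ∈ H, ∀ v ∈ H, c ≠ u + v * d) :
    H.card ^ 4 ≤ (Fintype.card F) ^ 3 := by
  set h : ℝ := (H.card : ℝ) with hh
  set q : ℝ := (Fintype.card F : ℝ) with hq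
  have hpos : 0 < h := by rw [hh]; exact_mod_cast hne.card_pos
  let e : F × F → F × F → ℝ := fun P l => if l.2 + d * l.1 * P.1 = c * P.2 then 1 else 0
  let n : F × F → ℝ := fun P => ∑ l ∈ H ×ˢ H, e P l
  have he1 : ∀ l, ∑ P, e P l = q := by
    intro l
    rw [Fintype.sum_prod_type]
    have : ∀ x : F, ∑ y : F, e (x, y) l = 1 := by
      intro x
      rw [Finset.sum_eq_single ((l.2 + d * l.1 * x) / c)]
      · simp only [e]; rw [if_pos]; field_simp
      · intro y _ hy
        simp only [e]; rw [if_neg]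
        intro h; apply hy; rw [h]; field_simp
      · simp
    simp [this, hq]
  have he2 : ∀ l l', ∑ P, e P l * e P l' ≤ (if l = l' then q else 0) + 1 := by
    intro l l'
    split_ifs with hl
    · subst hl
      have : ∀ P, e P l * e P l = e P l := by intro P; simp only [e]; split_ifs <;> simp
      simp only [this, he1]; linarith
    · have : ∀ P, e P l * e P l' =
          if (l.2 + d * l.1 * P.1 = c * P.2 ∧ l'.2 + d * l'.1 * P.1 = c * P.2) then 1 else 0 := by
        intro P; simp only [e]; split_ifs <;> simp_all
      simp only [this]
      rw [Finset.sum_boole, zero_add]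
      norm_cast
      rw [Finset.card_le_one]
      rintro ⟨x, y⟩ hP ⟨x', y'⟩ hP'
      simp only [Finset.mem_filter, Finset.mem_univ, true_and] at hP hP'
      obtain ⟨m, b⟩ := l
      obtain ⟨m', b'⟩ := l'
      simp only at hP hP'
      have hm : m - m' ≠ 0 := by
        intro hm
        have hm' : m = m' := sub_eq_zero.mp hm
        subst hm'
        apply hl
        have : b = b' := by
          have := hP.1.trans hP.2.symm
          exact add_right_cancel this
        rw [this]
      have hx : x = x' := by
        have h1 : d * (m - m') * (x - x') = 0 := by
          linear_combination hP.1 - hP.2 - hP'.1 + hP'.2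
        have := (mul_eq_zero.mp h1).resolve_left (mul_ne_zero hd hm)
        exact sub_eq_zero.mp this
      subst hx
      have hy : y = y' := mul_left_cancel₀ hc (hP.1.symm.trans hP'.1)
      rw [hy]
  have hcardHH : (((H ×ˢ H).card : ℕ) : ℝ) = h ^ 2 := by
    rw [Finset.card_product]; push_cast; ring
  have hn1 : ∑ P, n P = h ^ 2 * q := by
    simp only [n]
    rw [Finset.sum_comm]
    simp only [he1, Finset.sum_const, nsmul_eq_mul, hcardHH]
  have hn2 : ∑ P, n P ^ 2 ≤ h ^ 2 * q + h ^ 4 := by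
    have h1 : ∑ P, n P ^ 2 = ∑ l ∈ H ×ˢ H, ∑ l' ∈ H ×ˢ H, ∑ P, e P l * e P l' := by
      simp only [n, sq, Finset.sum_mul_sum]
      rw [Finset.sum_comm]
      refine Finset.sum_congr rfl fun l _ => ?_
      rw [Finset.sum_comm]
    rw [h1]
    calc _ ≤ ∑ l ∈ H ×ˢ H, ∑ l' ∈ H ×ˢ H, ((if l = l' then q else 0) + 1) :=
          Finset.sum_le_sum fun l _ => Finset.sum_le_sum fun l' _ => he2 l l'
      _ = ∑ l ∈ H ×ˢ H, (q + h ^ 2) := by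
          refine Finset.sum_congr rfl fun l hl => ?_
          rw [Finset.sum_add_distrib, Finset.sum_ite_eq, if_pos hl]
          simp only [Finset.sum_const, nsmul_eq_mul, hcardHH, mul_one]
      _ = _ := by
          simp only [Finset.sum_const, nsmul_eq_mul, hcardHH]; ring
  have hvar : ∑ P, (q * n P - h ^ 2) ^ 2 ≤ q ^ 3 * h ^ 2 := by
    have h1 : ∑ P, (q * n P - h ^ 2) ^ 2
        = q ^ 2 * ∑ P, n P ^ 2 - 2 * q * h ^ 2 * ∑ P, n P + q ^ 2 * h ^ 4 := by
      rw [Finset.mul_sum, Finset.mul_sum, ← Finset.sum_sub_distrib]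
      have : q ^ 2 * h ^ 4 = ∑ P : F × F, h ^ 4 := by
        rw [Finset.sum_const, Finset.card_univ, Fintype.card_prod, nsmul_eq_mul, Nat.cast_mul, ← hq]; ring
      rw [this, ← Finset.sum_add_distrib]
      refine Finset.sum_congr rfl fun P _ => ?_
      ring
    rw [h1, hn1]
    nlinarith [mul_le_mul_of_nonneg_left hn2 (sq_nonneg q)]
  have hz : ∀ P ∈ H ×ˢ H, n P = 0 := by
    rintro ⟨x, y⟩ hP
    rw [Finset.mem_product] at hP
    refine Finset.sum_eq_zero ?_
    rintro ⟨m, b⟩ hl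
    rw [Finset.mem_product] at hl
    simp only [e]
    rw [if_neg]
    intro heq
    simp only at hP hl heq
    apply hno (b * y⁻¹) (hmul _ hl.2 _ (hinv _ hP.2)) (m * x * y⁻¹)
      (hmul _ (hmul _ hl.1 _ hP.1) _ (hinv _ hP.2))
    have hy := h0 _ hP.2
    field_simp
    linear_combination -heq
  have hlow : h ^ 2 * h ^ 4 ≤ ∑ P, (q * n P - h ^ 2) ^ 2 := by
    calc h ^ 2 * h ^ 4 = ∑ P ∈ H ×ˢ H, (q * n P - h ^ 2) ^ 2 := by
          rw [Finset.sum_congr rfl (fun P hP => by rw [hz P hP])]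
          rw [Finset.sum_const, nsmul_eq_mul, hcardHH]; ring
      _ ≤ _ := Finset.sum_le_sum_of_subset_of_nonneg (Finset.subset_univ _)
          (fun _ _ _ => sq_nonneg _)
  have hfin : h ^ 2 * h ^ 4 ≤ h ^ 2 * q ^ 3 := by linarith
  have := le_of_mul_le_mul_left hfin (by positivity)
  rw [hh, hq] at this
  exact_mod_cast this

theorem aux_mono {l a b : ℕ} (hl : l.Prime) (hb : b ≠ 0) (hab : a ∣ b) :
    l ^ padicValNat l a ≤ l ^ padicValNat l b := by
  have := Fact.mk hl
  exact Nat.le_of_dvd (pow_pos hl.pos _) (pow_dvd_pow _ ((padicValNat_dvd_iff_le hb).1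
    (pow_padicValNat_dvd.trans hab)))

theorem aux_le {l a : ℕ} (ha : a ≠ 0) : l ^ padicValNat l a ≤ a :=
  Nat.le_of_dvd (Nat.pos_of_ne_zero ha) pow_padicValNat_dvd

theorem aux_val (p : ℕ) (hp : p.Prime) (l : ℕ) (hl : l.Prime) :
    ∃ C : ℕ, ∀ m : ℕ, m ≠ 0 → l ^ padicValNat l (p ^ m - 1) ≤ C * m := by
  have := Fact.mk hl
  have hp1 : 1 < p := hp.one_lt
  by_cases hlp : l = p
  · refine ⟨1, fun m hm => ?_⟩
    subst hlp
    have h1 : 1 ≤ l ^ m := Nat.one_le_pow _ _ hl.pos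
    have : ¬ l ∣ l ^ m - 1 := fun h => by
      have h2 := (Nat.dvd_sub_iff_right h1 (dvd_pow_self l hm)).1 h
      exact hl.one_lt.ne' (Nat.dvd_one.1 h2)
    rw [padicValNat.eq_zero_of_not_dvd this]
    simp; omega
  have hndvd : ¬ l ∣ p := fun h => hlp ((Nat.prime_dvd_prime_iff_eq hl hp).1 h)
  by_cases hl2 : l = 2
  · subst hl2
    refine ⟨(p + 1) * (p - 1) * 2, fun m hm => ?_⟩
    have h2m : 2 * m ≠ 0 := by omega
    have hbig : p ^ (2 * m) - 1 ≠ 0 := by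
      have := Nat.one_lt_pow h2m hp1; omega
    have hd : p ^ m - 1 ∣ p ^ (2 * m) - 1 := Nat.pow_sub_one_dvd_pow_sub_one p (Dvd.intro_left 2 rfl)
    refine (aux_mono hl hbig hd).trans ?_
    have := padicValNat.pow_two_sub_one hp1 hndvd h2m (even_two_mul m)
    calc 2 ^ padicValNat 2 (p ^ (2 * m) - 1)
        ≤ 2 ^ (padicValNat 2 (p ^ (2 * m) - 1) + 1) := Nat.pow_le_pow_right (by norm_num) (by omega)
      _ = 2 ^ padicValNat 2 (p + 1) * 2 ^ padicValNat 2 (p - 1) * 2 ^ padicValNat 2 (2 * m) := by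
          rw [this, pow_add, pow_add]
      _ ≤ (p + 1) * (p - 1) * (2 * m) := by
          gcongr <;> apply aux_le <;> omega
      _ = _ := by ring
  · have hodd : Odd l := hl.odd_of_ne_two hl2
    set K := p ^ (l - 1) with hK
    have hl1 : l - 1 ≠ 0 := by have := hl.one_lt; omega
    have hK1 : 1 < K := Nat.one_lt_pow hl1 hp1
    refine ⟨K - 1, fun m hm => ?_⟩
    have hbig : K ^ m - 1 ≠ 0 := by
      have := Nat.one_lt_pow hm hK1; omega
    have hd : p ^ m - 1 ∣ K ^ m - 1 := by
      rw [hK, ← pow_mul]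
      exact Nat.pow_sub_one_dvd_pow_sub_one p (Dvd.intro_left _ rfl)
    refine (aux_mono hl hbig hd).trans ?_
    have hlK : l ∣ K - 1 := by
      have hcop : Nat.Coprime p l := ((Nat.Prime.coprime_iff_not_dvd hl).2 hndvd).symm
      have := Nat.ModEq.pow_totient hcop
      rw [Nat.totient_prime hl] at this
      exact (Nat.modEq_iff_dvd' hK1.le).1 this.symm
    have hlK' : ¬ l ∣ K := fun h => hndvd (hl.dvd_of_dvd_pow h)
    have := padicValNat.pow_sub_pow (p := l) hodd hK1 hlK hlK' hm
    rw [one_pow] at this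
    rw [this, pow_add]
    gcongr <;> apply aux_le <;> omega

theorem aux_prod (p : ℕ) (hp : p.Prime) (T : Finset ℕ) (hT : ∀ l ∈ T, Nat.Prime l) :
    ∃ C : ℕ, ∀ m : ℕ, m ≠ 0 → ∏ l ∈ T, l ^ padicValNat l (p ^ m - 1) ≤ C * m ^ T.card := by
  have : ∀ l, ∃ C : ℕ, l ∈ T → ∀ m : ℕ, m ≠ 0 → l ^ padicValNat l (p ^ m - 1) ≤ C * m := by
    intro l
    by_cases h : l ∈ T
    · obtain ⟨C, hC⟩ := aux_val p hp l (hT l h)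
      exact ⟨C, fun _ => hC⟩
    · exact ⟨0, fun h' => absurd h' h⟩
  choose C hC using this
  refine ⟨∏ l ∈ T, C l, fun m hm => ?_⟩
  calc _ ≤ ∏ l ∈ T, (C l * m) := Finset.prod_le_prod' fun l hl => hC l hl m hm
    _ = _ := by rw [Finset.prod_mul_distrib, Finset.prod_const]

theorem aux_growth (C k : ℕ) : ∃ M : ℕ, ∀ m : ℕ, M ≤ m → 16 * (C * m ^ k) ^ 4 < 2 ^ m := by
  have h1 : Filter.Tendsto (fun m : ℕ => (m : ℝ) ^ (k * 4) / (2 : ℝ) ^ m) Filter.atTop (nhds 0) :=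
    tendsto_pow_const_div_const_pow_of_one_lt _ (by norm_num)
  have h2 := h1.const_mul (16 * (C : ℝ) ^ 4)
  rw [mul_zero] at h2
  have h3 := h2.eventually (gt_mem_nhds (show (0 : ℝ) < 1 by norm_num))
  obtain ⟨M, hM⟩ := Filter.eventually_atTop.1 h3
  refine ⟨M, fun m hm => ?_⟩
  have h4 := hM m hm
  rw [← mul_div_assoc, div_lt_one (by positivity)] at h4
  have : (16 * ((C : ℝ) * (m : ℝ) ^ k) ^ 4) < 2 ^ m := by
    calc _ = 16 * (C : ℝ) ^ 4 * (m : ℝ) ^ (k * 4) := by rw [mul_pow, ← pow_mul]; ring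
      _ < _ := h4
  exact_mod_cast this

theorem prop_3_7_ii
    (p : ℕ) (hp : p.Prime) (S : Set ℕ) (hSfin : S.Finite)
    (hSprime : ∀ ℓ ∈ S, Nat.Prime ℓ) :
    ∃ Q : ℕ, ∀ (F : Type) [Field F] [Fintype F] [CharP F p],
      Q < Fintype.card F →
      ∀ c d : F, c ≠ 0 → d ≠ 0 →
        ∃ a b : F, a ≠ 0 ∧ b ≠ 0 ∧ PrimaryOutside S a ∧ PrimaryOutside S b ∧
          c = a + b * d := by
  classical
  set T := hSfin.toFinset with hT
  have hTp : ∀ l ∈ T, Nat.Prime l := fun l hl => hSprime l (hSfin.mem_toFinset.1 hl)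
  obtain ⟨C, hC⟩ := aux_prod p hp T hTp
  obtain ⟨M, hM⟩ := aux_growth C T.card
  refine ⟨p ^ M, ?_⟩
  intro F _ _ _ hQ c d hc hd
  obtain ⟨m, -, hcard⟩ := FiniteField.card F p
  set q := Fintype.card F with hq
  have hMm : M < (m : ℕ) := by
    rw [hcard] at hQ
    exact (Nat.pow_lt_pow_iff_right hp.one_lt).1 hQ
  have hq1 : 1 < q := Fintype.one_lt_card
  set N := ∏ l ∈ T, l ^ padicValNat l (q - 1) with hN
  have hNle : N ≤ C * (m : ℕ) ^ T.card := by
    rw [hN, hcard]; exact hC m m.ne_zero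
  have hNpos : 0 < N := Finset.prod_pos fun l hl => pow_pos (hTp l hl).pos _
  have hNq : 16 * N ^ 4 < q := by
    calc 16 * N ^ 4 ≤ 16 * (C * (m : ℕ) ^ T.card) ^ 4 := by gcongr
      _ < 2 ^ (m : ℕ) := hM m hMm.le
      _ ≤ p ^ (m : ℕ) := Nat.pow_le_pow_left hp.two_le _
      _ = q := hcard.symm
  have hNdvd : N ∣ q - 1 := by
    refine Finset.prod_dvd_of_isRelPrime ?_ fun l hl => pow_padicValNat_dvd
    intro l hl l' hl' hne
    exact Nat.coprime_iff_isRelPrime.1 (Nat.Coprime.pow _ _ ((Nat.coprime_primes (hTp l hl) (hTp l' hl')).2 hne))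
  let H : Finset F := Finset.univ.image (fun z : Fˣ => ((z ^ N : Fˣ) : F))
  have hHmem : ∀ x, x ∈ H ↔ ∃ z : Fˣ, ((z ^ N : Fˣ) : F) = x := by simp [H]
  have hprim : ∀ x ∈ H, x ≠ 0 ∧ PrimaryOutside S x := by
    intro x hx
    obtain ⟨z, rfl⟩ := (hHmem x).1 hx
    refine ⟨Units.ne_zero _, ?_⟩
    obtain ⟨R, hR⟩ := hNdvd
    have hpow : (((z ^ N : Fˣ) : F)) ^ R = 1 := by
      rw [← Units.val_pow_eq_pow_val, ← pow_mul, ← hR, ← Fintype.card_units, pow_card_eq_one, Units.val_one]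
    have hRpos : 0 < R := Nat.pos_of_ne_zero (by rintro rfl; omega)
    refine ⟨isOfFinOrder_iff_pow_eq_one.2 ⟨R, hRpos, hpow⟩, ?_⟩
    intro l hl hlo hlS
    have := Fact.mk hl
    have hlR : l ∣ R := hlo.trans (orderOf_dvd_of_pow_eq_one hpow)
    have hlT : l ∈ T := hSfin.mem_toFinset.2 hlS
    have h1 : l ^ padicValNat l (q - 1) ∣ N :=
      Finset.dvd_prod_of_mem (fun l => l ^ padicValNat l (q - 1)) hlT
    have h2 : l ^ (padicValNat l (q - 1) + 1) ∣ q - 1 := by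
      rw [pow_succ, hR]
      rw [hR] at h1
      exact mul_dvd_mul h1 hlR
    have := (padicValNat_dvd_iff_le (by omega)).1 h2
    omega
  have hHcard : q - 1 ≤ N * H.card := by
    have := Finset.card_le_mul_card_image (f := fun z : Fˣ => ((z ^ N : Fˣ) : F)) Finset.univ N ?_
    · rwa [Finset.card_univ, Fintype.card_units] at this
    · intro b _
      calc _ = (Finset.image (fun z : Fˣ => (z : F))
              (Finset.univ.filter (fun z : Fˣ => ((z ^ N : Fˣ) : F) = b))).card :=
            (Finset.card_image_of_injective _ Units.val_injective).symm
        _ ≤ (Polynomial.nthRoots N b).toFinset.card := by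
            refine Finset.card_le_card ?_
            intro x hx
            obtain ⟨z, hz, rfl⟩ := Finset.mem_image.1 hx
            rw [Multiset.mem_toFinset, Polynomial.mem_nthRoots hNpos]
            simpa using hz
        _ ≤ _ := (Multiset.toFinset_card_le _).trans (Polynomial.card_nthRoots N b)
  by_contra hcon
  have key := aux_incidence H ⟨1, (hHmem 1).2 ⟨1, by simp⟩⟩ (fun x hx => (hprim x hx).1)
    (by
      intro x hx y hy
      obtain ⟨z, rfl⟩ := (hHmem x).1 hx
      obtain ⟨w, rfl⟩ := (hHmem y).1 hy
      exact (hHmem _).2 ⟨z * w, by simp [mul_pow]⟩)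
    (by
      intro x hx
      obtain ⟨z, rfl⟩ := (hHmem x).1 hx
      exact (hHmem _).2 ⟨z⁻¹, by simp⟩)
    c d hc hd
    (by
      intro u hu v hv he
      exact hcon ⟨u, v, (hprim u hu).1, (hprim v hv).1, (hprim u hu).2, (hprim v hv).2, he⟩)
  rw [← hq] at key
  have h1 : q ≤ 2 * (N * H.card) := by omega
  have h2 : q ^ 4 ≤ (2 * (N * H.card)) ^ 4 := Nat.pow_le_pow_left h1 4
  have h3 : q ^ 4 ≤ 16 * N ^ 4 * q ^ 3 := by
    calc q ^ 4 ≤ (2 * (N * H.card)) ^ 4 := h2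
      _ = 16 * N ^ 4 * H.card ^ 4 := by ring
      _ ≤ _ := Nat.mul_le_mul_left _ key
  have h4 : 16 * N ^ 4 * q ^ 3 < q * q ^ 3 := Nat.mul_lt_mul_of_pos_right hNq (by positivity)
  have h5 : q * q ^ 3 = q ^ 4 := by ring
  omega
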